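/- Let P be a finite-volume right-angled convex hyperbolic n-polyhedron (n ≥ 2) and let 1 ≤ k ≤ n − 1. Then every finite vertex of P is contained in exactly C(n, k) k-faces of P, and every ideal vertex of P is contained in exactly C(n−1, k−1) · 2^{n−k} k-faces of P (the link of a finite vertex is an (n−1)-simplex and the link of an ideal vertex is an (n−1)-cube). In particular, every ideal vertex is contained in exactly 2(n−1) facets. -/

import Mathlib

open scoped BigOperators

noncomputable section

/-- The Minkowski bilinear form `⟨x,y⟩ = -x₀y₀ + x₁y₁ + ⋯ + xₙyₙ` on `ℝ^{n+1}`. -/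
def mink {n : ℕ} (x y : Fin (n + 1) → ℝ) : ℝ :=
  -(x 0 * y 0) + ∑ i : Fin n, x i.succ * y i.succ

/-- The hyperboloid model of the hyperbolic space `ℍⁿ`. -/
def Hyperboloid (n : ℕ) : Set (Fin (n + 1) → ℝ) :=
  {x | mink x x = -1 ∧ 0 < x 0}

/-- The Klein projection `x ↦ (x₁/x₀, …, xₙ/x₀)` of the hyperboloid onto the unit ball. -/
def kleinMap {n : ℕ} (x : Fin (n + 1) → ℝ) : EuclideanSpace ℝ (Fin n) :=
  WithLp.toLp 2 fun i => x i.succ / x 0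

/-- Dimension of a subset of a real vector space: the rank of its vector span. -/
def sdim {n : ℕ} (s : Set (EuclideanSpace ℝ (Fin n))) : ℕ :=
  Module.finrank ℝ (vectorSpan ℝ s)

/-- A convex hyperbolic `n`-polyhedron: a finite intersection of hyperbolic half-spaces
`H_{eᵢ}⁻ = {x : ⟨eᵢ,x⟩ ≤ 0}` (with `⟨eᵢ,eᵢ⟩ = 1`) having nonempty interior
(equivalently, its Klein-model image has nonempty interior in `ℝⁿ`). -/
structure HypPolyhedron (n : ℕ) where
  m : ℕ
  e : Fin m → (Fin (n + 1) → ℝ)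
  unit : ∀ i, mink (e i) (e i) = 1
  nonempty_int :
    (interior (kleinMap '' {x ∈ Hyperboloid n | ∀ i, mink (e i) x ≤ 0})).Nonempty

namespace HypPolyhedron

variable {n : ℕ} (P : HypPolyhedron n)

/-- The set of points of the polyhedron in the hyperboloid model. -/
def carrier : Set (Fin (n + 1) → ℝ) :=
  {x ∈ Hyperboloid n | ∀ i, mink (P.e i) x ≤ 0}

/-- `P̄`: the closure of the Klein-model image of the polyhedron in the closed unit ball. -/
def cl : Set (EuclideanSpace ℝ (Fin n)) :=
  closure (kleinMap '' P.carrier)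

/-- The `k`-faces of `P`: the `k`-dimensional (nonempty) exposed faces of `P̄`. -/
def faces (k : ℕ) : Set (Set (EuclideanSpace ℝ (Fin n))) :=
  {F | IsExposed ℝ P.cl F ∧ F.Nonempty ∧ sdim F = k}

/-- `a_k(P)`: the number of `k`-faces of `P`. -/
def a (k : ℕ) : ℕ := (P.faces k).ncard

/-- Vertices of `P`: the points of `0`-dimensional exposed faces of `P̄`. -/
def verts : Set (EuclideanSpace ℝ (Fin n)) :=
  {v | IsExposed ℝ P.cl {v}}

/-- Ideal vertices: vertices lying on the unit sphere. -/
def idealVerts : Set (EuclideanSpace ℝ (Fin n)) :=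
  {v ∈ P.verts | ‖v‖ = 1}

/-- Finite vertices: vertices lying in the open unit ball. -/
def finiteVerts : Set (EuclideanSpace ℝ (Fin n)) :=
  {v ∈ P.verts | ‖v‖ < 1}

/-- `v_∞(P)`: the number of ideal vertices of `P`. -/
def vInf : ℕ := P.idealVerts.ncard

/-- The bounding hyperplane `H_e` contains the face `F`. -/
def faceInHyperplane (e : Fin (n + 1) → ℝ) (F : Set (EuclideanSpace ℝ (Fin n))) : Prop :=
  ∀ x ∈ P.carrier, kleinMap x ∈ F → mink e x = 0

/-- `P` is right-angled: whenever two distinct bounding hyperplanes both contain an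
`(n-2)`-dimensional face of `P`, the corresponding unit normals are orthogonal,
i.e. the dihedral angle is `π/2`. -/
def IsRightAngled : Prop :=
  ∀ i j : Fin P.m, i ≠ j →
    (∃ F ∈ P.faces (n - 2), P.faceInHyperplane (P.e i) F ∧ P.faceInHyperplane (P.e j) F) →
    mink (P.e i) (P.e j) = 0

/-- `P` has finite volume: `P̄` is the convex hull of its (finitely many) vertices. -/
def FiniteVolume : Prop :=
  P.verts.Finite ∧ P.cl = convexHull ℝ P.verts

/-- `P` is compact: finite volume and all vertices are finite. -/
def IsCompactPoly : Prop :=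
  P.FiniteVolume ∧ ∀ v ∈ P.verts, ‖v‖ < 1

/-- `P` is ideal: finite volume and all vertices are ideal. -/
def IsIdeal : Prop :=
  P.FiniteVolume ∧ ∀ v ∈ P.verts, ‖v‖ = 1

end HypPolyhedron

/-- `ν(P) = a_{n-1}(P) + v_∞(P)` ranging over the family `𝒫ⁿ` of finite-volume non-compact
right-angled convex hyperbolic `n`-polyhedra. -/
def nuSet (n : ℕ) : Set ℕ :=
  {m | ∃ P : HypPolyhedron n,
        P.FiniteVolume ∧ P.IsRightAngled ∧ ¬ P.IsCompactPoly ∧ P.a (n - 1) + P.vInf = m}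

/-- `νₙ = sInf {ν(P) : P ∈ 𝒫ⁿ}` (with `sInf ∅ = 0`). -/
def nu (n : ℕ) : ℕ := sInf (nuSet n)

section Lorentz

open Set Filter Topology

variable {n : ℕ}

/-- The spatial part `(x₁, …, xₙ)` of a vector of Minkowski space. -/
def spatial (x : Fin (n + 1) → ℝ) : EuclideanSpace ℝ (Fin n) :=
  WithLp.toLp 2 fun i => x i.succ

/-- The homogeneous lift `y ↦ (1, y)`. -/
def homog (y : EuclideanSpace ℝ (Fin n)) : Fin (n + 1) → ℝ :=
  Fin.cons 1 fun i => y i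

/-- The open future cone. -/
def Timelike (x : Fin (n + 1) → ℝ) : Prop := ‖spatial x‖ < x 0

theorem mink_eq (x y : Fin (n + 1) → ℝ) :
    mink x y = -(x 0 * y 0) + inner ℝ (spatial x) (spatial y) := by
  simp [mink, spatial, PiLp.inner_apply, mul_comm]

theorem mink_self (x : Fin (n + 1) → ℝ) : mink x x = ‖spatial x‖ ^ 2 - x 0 ^ 2 := by
  rw [mink_eq, real_inner_self_eq_norm_sq]; ring

theorem spatial_add (x y : Fin (n + 1) → ℝ) : spatial (x + y) = spatial x + spatial y := by
  ext; simp [spatial]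

theorem spatial_smul (c : ℝ) (x : Fin (n + 1) → ℝ) : spatial (c • x) = c • spatial x := by
  ext; simp [spatial]

@[simp] theorem homog_zero (y : EuclideanSpace ℝ (Fin n)) : homog y 0 = 1 := rfl

@[simp] theorem spatial_homog (y : EuclideanSpace ℝ (Fin n)) : spatial (homog y) = y := by
  ext; simp [spatial, homog]

theorem eq_of_spatial {x y : Fin (n + 1) → ℝ} (h0 : x 0 = y 0) (h : spatial x = spatial y) :
    x = y := by
  funext i
  refine Fin.cases h0 (fun j => ?_) i
  simpa [spatial] using congrArg (fun z => z j) h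

theorem mink_comm (x y : Fin (n + 1) → ℝ) : mink x y = mink y x := by
  simp [mink, mul_comm]

theorem mink_add_right (x y z : Fin (n + 1) → ℝ) : mink x (y + z) = mink x y + mink x z := by
  simp only [mink_eq, spatial_add, inner_add_right, Pi.add_apply]; ring

theorem mink_smul_right (c : ℝ) (x y : Fin (n + 1) → ℝ) : mink x (c • y) = c * mink x y := by
  simp only [mink_eq, spatial_smul, inner_smul_right, Pi.smul_apply, smul_eq_mul]; ring

/-- The Minkowski form as a linear functional of its second argument. -/
def minkL (x : Fin (n + 1) → ℝ) : (Fin (n + 1) → ℝ) →ₗ[ℝ] ℝ where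
  toFun := mink x
  map_add' := mink_add_right x
  map_smul' c := mink_smul_right c x

theorem mink_sub_right (x y z : Fin (n + 1) → ℝ) : mink x (y - z) = mink x y - mink x z :=
  map_sub (minkL x) y z

theorem mink_neg_right (x y : Fin (n + 1) → ℝ) : mink x (-y) = -mink x y :=
  map_neg (minkL x) y

theorem mink_zero_right (x : Fin (n + 1) → ℝ) : mink x 0 = 0 :=
  map_zero (minkL x)

theorem mink_sum_right {ι : Type*} (s : Finset ι) (x : Fin (n + 1) → ℝ)
    (f : ι → Fin (n + 1) → ℝ) : mink x (∑ i ∈ s, f i) = ∑ i ∈ s, mink x (f i) :=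
  map_sum (minkL x) f s

theorem mink_add_left (x y z : Fin (n + 1) → ℝ) : mink (x + y) z = mink x z + mink y z := by
  simp only [mink_comm _ z, mink_add_right]

theorem mink_sub_left (x y z : Fin (n + 1) → ℝ) : mink (x - y) z = mink x z - mink y z := by
  simp only [mink_comm _ z, mink_sub_right]

theorem mink_smul_left (c : ℝ) (x y : Fin (n + 1) → ℝ) : mink (c • x) y = c * mink x y := by
  simp only [mink_comm _ y, mink_smul_right]

theorem mink_neg_left (x y : Fin (n + 1) → ℝ) : mink (-x) y = -mink x y := by
  simp only [mink_comm _ y, mink_neg_right]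

theorem mink_zero_left (x : Fin (n + 1) → ℝ) : mink 0 x = 0 := by
  rw [mink_comm, mink_zero_right]

theorem mink_sum_left {ι : Type*} (s : Finset ι) (f : ι → Fin (n + 1) → ℝ)
    (x : Fin (n + 1) → ℝ) : mink (∑ i ∈ s, f i) x = ∑ i ∈ s, mink (f i) x := by
  simp only [mink_comm _ x, mink_sum_right]

theorem continuous_mink (x : Fin (n + 1) → ℝ) : Continuous (mink x) :=
  (minkL x).continuous_of_finiteDimensional

theorem continuous_spatial : Continuous (spatial : (Fin (n + 1) → ℝ) → _) := by
  unfold spatial; fun_prop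

theorem continuous_homog : Continuous (homog : EuclideanSpace ℝ (Fin n) → _) := by
  refine continuous_pi fun i => Fin.cases ?_ (fun j => ?_) i
  · simpa [homog] using continuous_const
  · simp only [homog, Fin.cons_succ]; fun_prop

theorem mink_homog (x : Fin (n + 1) → ℝ) (y : EuclideanSpace ℝ (Fin n)) :
    mink x (homog y) = -x 0 + inner ℝ (spatial x) y := by
  simp [mink_eq]

theorem homog_combo {a b : ℝ} (hab : a + b = 1) (y z : EuclideanSpace ℝ (Fin n)) :
    homog (a • y + b • z) = a • homog y + b • homog z := by
  refine eq_of_spatial ?_ ?_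
  · simp [hab]
  · simp [spatial_add, spatial_smul]

theorem Timelike.pos {x : Fin (n + 1) → ℝ} (hx : Timelike x) : 0 < x 0 :=
  (norm_nonneg _).trans_lt hx

theorem Timelike.mink_self_neg {x : Fin (n + 1) → ℝ} (hx : Timelike x) : mink x x < 0 := by
  rw [mink_self]
  have h : ‖spatial x‖ < x 0 := hx
  nlinarith [norm_nonneg (spatial x)]

theorem timelike_iff {x : Fin (n + 1) → ℝ} : Timelike x ↔ mink x x < 0 ∧ 0 < x 0 := by
  refine ⟨fun h => ⟨h.mink_self_neg, h.pos⟩, fun ⟨h, h0⟩ => ?_⟩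
  rw [mink_self] at h
  exact lt_of_pow_lt_pow_left₀ 2 h0.le (by linarith)

theorem isOpen_timelike : IsOpen {x : Fin (n + 1) → ℝ | Timelike x} :=
  isOpen_lt (continuous_norm.comp continuous_spatial) (continuous_apply 0)

theorem Timelike.smul {x : Fin (n + 1) → ℝ} (hx : Timelike x) {c : ℝ} (hc : 0 < c) :
    Timelike (c • x) := by
  have h : ‖spatial x‖ < x 0 := hx
  simpa [Timelike, spatial_smul, norm_smul, abs_of_pos hc] using mul_lt_mul_of_pos_left h hc

theorem Timelike.add {x y : Fin (n + 1) → ℝ} (hx : Timelike x) (hy : Timelike y) :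
    Timelike (x + y) := by
  have h1 : ‖spatial x‖ < x 0 := hx
  have h2 : ‖spatial y‖ < y 0 := hy
  have := norm_add_le (spatial x) (spatial y)
  simp only [Timelike, spatial_add, Pi.add_apply]
  linarith

theorem convex_timelike : Convex ℝ {x : Fin (n + 1) → ℝ | Timelike x} := by
  refine convex_iff_forall_pos.2 fun x hx y hy a b ha hb _ => ?_
  exact Timelike.add (Timelike.smul hx ha) (Timelike.smul hy hb)

theorem timelike_homog {y : EuclideanSpace ℝ (Fin n)} : Timelike (homog y) ↔ ‖y‖ < 1 := by
  simp [Timelike]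

/-- A timelike vector on the same side as a future timelike vector is future timelike. -/
theorem Timelike.of_mink_neg {x y : Fin (n + 1) → ℝ} (hx : Timelike x) (hy : mink y y < 0)
    (hxy : mink x y < 0) : Timelike y := by
  refine timelike_iff.2 ⟨hy, ?_⟩
  by_contra! h0
  have h1 : ‖spatial x‖ < x 0 := hx
  have h2 := abs_le.1 (abs_real_inner_le_norm (spatial x) (spatial y))
  rw [mink_self] at hy
  rw [mink_eq] at hxy
  have h3 : ‖spatial y‖ < -y 0 :=
    lt_of_pow_lt_pow_left₀ 2 (by linarith) (by linarith [neg_sq (y 0)])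
  nlinarith [norm_nonneg (spatial x), norm_nonneg (spatial y)]

/-- The orthogonal complement of a timelike vector is positive definite. -/
theorem Timelike.mink_self_pos {x y : Fin (n + 1) → ℝ} (hx : Timelike x) (hxy : mink x y = 0)
    (hy : y ≠ 0) : 0 < mink y y := by
  by_contra! h
  have h1 : ‖spatial x‖ < x 0 := hx
  have h2 := abs_real_inner_le_norm (spatial x) (spatial y)
  rw [mink_self] at h
  rw [mink_eq] at hxy
  have h3 : ‖spatial y‖ ≤ |y 0| := by
    rw [← abs_of_nonneg (norm_nonneg (spatial y))]
    exact sq_le_sq.1 (by linarith)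
  have h4 : x 0 * |y 0| ≤ ‖spatial x‖ * |y 0| := by
    calc x 0 * |y 0| = |x 0 * y 0| := by rw [abs_mul, abs_of_pos hx.pos]
      _ = |inner ℝ (spatial x) (spatial y)| := by congr 1; linarith
      _ ≤ _ := h2.trans (mul_le_mul_of_nonneg_left h3 (norm_nonneg _))
  have h5 : |y 0| = 0 := by nlinarith [abs_nonneg (y 0)]
  have h6 : ‖spatial y‖ = 0 := le_antisymm (h3.trans h5.le) (norm_nonneg _)
  refine hy (eq_of_spatial (by simpa using h5) ?_)
  rw [norm_eq_zero.1 h6]; ext; simp [spatial]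

theorem mink_self_of_orthogonal_ideal {v : EuclideanSpace ℝ (Fin n)} (hv : ‖v‖ = 1)
    {y : Fin (n + 1) → ℝ} (h : mink (homog v) y = 0) :
    mink y y = ‖spatial y - y 0 • v‖ ^ 2 := by
  rw [mink_comm, mink_homog, real_inner_comm] at h
  rw [mink_self, norm_sub_sq_real, norm_smul, inner_smul_right, hv, real_inner_comm]
  simp only [Real.norm_eq_abs, mul_one, sq_abs]
  rw [show inner ℝ v (spatial y) = y 0 by linarith]; ring

theorem mink_self_nonneg_of_orthogonal_ideal {v : EuclideanSpace ℝ (Fin n)} (hv : ‖v‖ = 1)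
    {y : Fin (n + 1) → ℝ} (h : mink (homog v) y = 0) : 0 ≤ mink y y := by
  rw [mink_self_of_orthogonal_ideal hv h]; positivity

theorem eq_smul_of_orthogonal_ideal {v : EuclideanSpace ℝ (Fin n)} (hv : ‖v‖ = 1)
    {y : Fin (n + 1) → ℝ} (h : mink (homog v) y = 0) (hy : mink y y ≤ 0) :
    y = y 0 • homog v := by
  rw [mink_self_of_orthogonal_ideal hv h] at hy
  have : ‖spatial y - y 0 • v‖ = 0 := by
    have := norm_nonneg (spatial y - y 0 • v); nlinarith
  refine eq_of_spatial (by simp) ?_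
  rw [spatial_smul, spatial_homog]
  exact sub_eq_zero.1 (norm_eq_zero.1 this)

theorem Timelike.mink_ideal_neg {x : Fin (n + 1) → ℝ} (hx : Timelike x)
    {v : EuclideanSpace ℝ (Fin n)} (hv : ‖v‖ = 1) : mink (homog v) x < 0 := by
  rw [mink_comm, mink_homog]
  have h1 : ‖spatial x‖ < x 0 := hx
  have h2 := real_inner_le_norm (spatial x) v
  rw [hv] at h2; linarith

theorem mink_ideal_homog_neg {v q : EuclideanSpace ℝ (Fin n)} (hv : ‖v‖ = 1) (hq : ‖q‖ ≤ 1)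
    (h : q ≠ v) : mink (homog v) (homog q) < 0 := by
  rw [mink_homog, spatial_homog, homog_zero]
  have h1 : 0 < ‖v - q‖ := norm_pos_iff.2 (sub_ne_zero.2 h.symm)
  have h2 := norm_sub_sq_real v q
  rw [hv] at h2
  nlinarith [norm_nonneg q]

theorem Timelike.homog_kleinMap {x : Fin (n + 1) → ℝ} (hx : Timelike x) :
    homog (kleinMap x) = (x 0)⁻¹ • x := by
  refine eq_of_spatial ?_ ?_
  · simp [hx.pos.ne']
  · ext i; simp [spatial, kleinMap, homog, div_eq_inv_mul]

end Lorentz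

section Irredundant

/-- A finite system of linear inequalities that is strictly feasible on a convex set can be
thinned out to an irredundant one, each remaining inequality having a witness on which it alone
is tight. -/
theorem exists_irredundant {V ι : Type*} [AddCommGroup V] [Module ℝ V] [DecidableEq ι]
    (g : ι → V →ₗ[ℝ] ℝ) {K : Set V} (hK : Convex ℝ K) (s : Finset ι) {x₀ : V} (hx₀ : x₀ ∈ K)
    (hs : ∀ i ∈ s, g i x₀ < 0) :
    ∃ t ⊆ s, (∀ x ∈ K, (∀ i ∈ t, g i x ≤ 0) → ∀ i ∈ s, g i x ≤ 0) ∧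
      ∀ i ∈ t, ∃ w ∈ K, g i w = 0 ∧ ∀ j ∈ t, j ≠ i → g j w < 0 := by
  induction s using Finset.strongInduction with
  | H s ih =>
    by_cases h : ∃ i ∈ s, ∀ x ∈ K, (∀ j ∈ s.erase i, g j x ≤ 0) → g i x ≤ 0
    · obtain ⟨i, hi, hred⟩ := h
      obtain ⟨t, hts, ht, hw⟩ := ih _ (Finset.erase_ssubset hi)
        fun j hj => hs j (Finset.mem_of_mem_erase hj)
      refine ⟨t, hts.trans (Finset.erase_subset _ _), fun x hx hxt j hj => ?_, hw⟩
      by_cases hji : j = i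
      · subst hji; exact hred x hx (ht x hx hxt)
      · exact ht x hx hxt j (Finset.mem_erase.2 ⟨hji, hj⟩)
    · push Not at h
      refine ⟨s, subset_rfl, fun x _ hx => hx, fun i hi => ?_⟩
      obtain ⟨y, hy, hyj, hyi⟩ := h i hi
      have h0 := hs i hi
      have hd : 0 < g i y - g i x₀ := by linarith
      refine ⟨(g i y / (g i y - g i x₀)) • x₀ + (-g i x₀ / (g i y - g i x₀)) • y,
        hK hx₀ hy (by positivity) (div_nonneg (by linarith) hd.le) ?_, ?_, fun j hj hji => ?_⟩
      · field_simp; ring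
      · simp only [map_add, map_smul, smul_eq_mul]; field_simp; ring
      · simp only [map_add, map_smul, smul_eq_mul]
        have h1 : g i y / (g i y - g i x₀) * g j x₀ < 0 :=
          mul_neg_of_pos_of_neg (by positivity) (hs j hj)
        have h2 : -g i x₀ / (g i y - g i x₀) * g j y ≤ 0 :=
          mul_nonpos_of_nonneg_of_nonpos (div_nonneg (by linarith) hd.le)
            (hyj j (Finset.mem_erase.2 ⟨hji, hj⟩))
        linarith

end Irredundant

namespace HypPolyhedron

open Set Filter Topology

variable {n : ℕ} (P : HypPolyhedron n)

theorem kleinMap_image_carrier :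
    kleinMap '' P.carrier = {y | ‖y‖ < 1 ∧ ∀ i, mink (P.e i) (homog y) ≤ 0} := by
  ext y
  constructor
  · rintro ⟨x, ⟨⟨hx, hx0⟩, hxe⟩, rfl⟩
    have hT : Timelike x := timelike_iff.2 ⟨by rw [hx]; norm_num, hx0⟩
    have hinv : 0 < (x 0)⁻¹ := inv_pos.2 hx0
    refine ⟨timelike_homog.1 ?_, fun i => ?_⟩
    · rw [hT.homog_kleinMap]; exact hT.smul hinv
    · rw [hT.homog_kleinMap, mink_smul_right]
      exact mul_nonpos_of_nonneg_of_nonpos hinv.le (hxe i)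
  · rintro ⟨hy, hye⟩
    have hT := timelike_homog.2 hy
    have hm := hT.mink_self_neg
    set r := √(-mink (homog y) (homog y)) with hr
    have hr0 : 0 < r := Real.sqrt_pos.2 (by linarith)
    have hr2 : r ^ 2 = -mink (homog y) (homog y) := Real.sq_sqrt (by linarith)
    refine ⟨r⁻¹ • homog y, ⟨⟨?_, ?_⟩, fun i => ?_⟩, ?_⟩
    · rw [mink_smul_right, mink_smul_left]
      have : mink (homog y) (homog y) = -r ^ 2 := by linarith
      rw [this]; field_simp
    · simpa using hr0
    · rw [mink_smul_right]
      exact mul_nonpos_of_nonneg_of_nonpos (inv_pos.2 hr0).le (hye i)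
    · ext i
      simp only [kleinMap, homog, Pi.smul_apply, Fin.cons_succ, Fin.cons_zero, smul_eq_mul]
      field_simp

theorem exists_strict_point :
    ∃ y₀ : EuclideanSpace ℝ (Fin n), ‖y₀‖ < 1 ∧ ∀ i, mink (P.e i) (homog y₀) < 0 := by
  obtain ⟨y₀, hy₀⟩ := P.nonempty_int
  change y₀ ∈ interior (kleinMap '' P.carrier) at hy₀
  rw [kleinMap_image_carrier] at hy₀
  refine ⟨y₀, (interior_subset hy₀).1, fun i => ?_⟩
  by_contra! h
  have hd : 0 < ‖spatial (P.e i)‖ ^ 2 := by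
    have := mink_self (P.e i)
    rw [P.unit] at this; nlinarith [sq_nonneg (P.e i 0)]
  have hc : Tendsto (fun t : ℝ => y₀ + t • spatial (P.e i)) (𝓝[>] 0) (𝓝 y₀) := by
    have : Continuous fun t : ℝ => y₀ + t • spatial (P.e i) := by fun_prop
    simpa using (this.tendsto 0).mono_left nhdsWithin_le_nhds
  obtain ⟨t, ht, ht0⟩ := ((hc.eventually (mem_interior_iff_mem_nhds.1 hy₀)).and
    self_mem_nhdsWithin).exists
  have h1 := ht.2 i
  rw [mink_homog, inner_add_right, inner_smul_right, real_inner_self_eq_norm_sq] at h1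
  rw [mink_homog] at h
  nlinarith [mul_pos (mem_Ioi.1 ht0) hd]

/-- A set of half-spaces cutting out `P` inside the future cone, none of which is redundant. -/
structure IsIrredundant (E : Finset (Fin P.m)) : Prop where
  le_zero : ∀ x, Timelike x → (∀ i ∈ E, mink (P.e i) x ≤ 0) → ∀ i, mink (P.e i) x ≤ 0
  witness : ∀ i ∈ E, ∃ w, Timelike w ∧ mink (P.e i) w = 0 ∧
    ∀ j ∈ E, j ≠ i → mink (P.e j) w < 0

theorem exists_isIrredundant : ∃ E, P.IsIrredundant E := by
  obtain ⟨y₀, hy₀, hs⟩ := P.exists_strict_point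
  obtain ⟨E, -, h1, h2⟩ := exists_irredundant (fun i => minkL (P.e i)) convex_timelike
    Finset.univ (timelike_homog.2 hy₀) fun i _ => hs i
  exact ⟨E, fun x hx hxE i => h1 x hx hxE i (Finset.mem_univ i), h2⟩

variable {P}

theorem IsIrredundant.cl_eq {E : Finset (Fin P.m)} (hE : P.IsIrredundant E) :
    P.cl = {y | ‖y‖ ≤ 1 ∧ ∀ i ∈ E, mink (P.e i) (homog y) ≤ 0} := by
  have himg : kleinMap '' P.carrier = {y | ‖y‖ < 1 ∧ ∀ i ∈ E, mink (P.e i) (homog y) ≤ 0} := by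
    rw [kleinMap_image_carrier]
    ext y
    exact ⟨fun h => ⟨h.1, fun i _ => h.2 i⟩,
      fun h => ⟨h.1, hE.le_zero _ (timelike_homog.2 h.1) h.2⟩⟩
  have hclosed : IsClosed {y : EuclideanSpace ℝ (Fin n) |
      ‖y‖ ≤ 1 ∧ ∀ i ∈ E, mink (P.e i) (homog y) ≤ 0} := by
    have : {y : EuclideanSpace ℝ (Fin n) | ‖y‖ ≤ 1 ∧ ∀ i ∈ E, mink (P.e i) (homog y) ≤ 0} =
        {y | ‖y‖ ≤ 1} ∩ ⋂ i ∈ E, {y | mink (P.e i) (homog y) ≤ 0} := by ext; simp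
    rw [this]
    exact (isClosed_le continuous_norm continuous_const).inter (isClosed_biInter fun i _ =>
      isClosed_le ((continuous_mink _).comp continuous_homog) continuous_const)
  rw [cl, himg]
  refine subset_antisymm (closure_minimal (fun y hy => ⟨hy.1.le, hy.2⟩) hclosed) ?_
  rintro y ⟨hy, hyE⟩
  obtain ⟨y₀, hy₀, hs⟩ := P.exists_strict_point
  have hc : Tendsto (fun t : ℝ => (1 - t) • y + t • y₀) (𝓝[>] 0) (𝓝 y) := by
    have : Continuous fun t : ℝ => (1 - t) • y + t • y₀ := by fun_prop
    simpa using (this.tendsto 0).mono_left nhdsWithin_le_nhds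
  refine mem_closure_of_tendsto hc ?_
  filter_upwards [Ioo_mem_nhdsGT (zero_lt_one' ℝ)] with t ht
  refine ⟨?_, fun i hi => ?_⟩
  · calc ‖(1 - t) • y + t • y₀‖ ≤ (1 - t) * ‖y‖ + t * ‖y₀‖ := by
          refine (norm_add_le _ _).trans_eq ?_
          rw [norm_smul, norm_smul, Real.norm_of_nonneg (by linarith [ht.2]),
            Real.norm_of_nonneg ht.1.le]
      _ < 1 := by nlinarith [ht.1, ht.2]
  · rw [homog_combo (by ring), mink_add_right, mink_smul_right, mink_smul_right]
    nlinarith [ht.1, ht.2, hyE i hi, hs i]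

end HypPolyhedron

namespace HypPolyhedron

open Set Filter Topology

variable {n : ℕ} {P : HypPolyhedron n}

theorem mink_nonpos_of_mem_cl {y : EuclideanSpace ℝ (Fin n)} (hy : y ∈ P.cl) (i : Fin P.m) :
    mink (P.e i) (homog y) ≤ 0 := by
  have hc : IsClosed {y : EuclideanSpace ℝ (Fin n) | mink (P.e i) (homog y) ≤ 0} :=
    isClosed_le ((continuous_mink _).comp continuous_homog) continuous_const
  refine closure_minimal (t := {y | mink (P.e i) (homog y) ≤ 0}) ?_ hc hy
  rw [kleinMap_image_carrier]
  exact fun z hz => hz.2 i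

theorem norm_le_one_of_mem_cl {y : EuclideanSpace ℝ (Fin n)} (hy : y ∈ P.cl) : ‖y‖ ≤ 1 := by
  refine closure_minimal (t := {y | ‖y‖ ≤ 1}) ?_
    (isClosed_le continuous_norm continuous_const) hy
  rw [kleinMap_image_carrier]
  exact fun z hz => hz.1.le

theorem mem_cl_of_norm_lt {y : EuclideanSpace ℝ (Fin n)} (hy : ‖y‖ < 1)
    (h : ∀ i, mink (P.e i) (homog y) ≤ 0) : y ∈ P.cl := by
  refine subset_closure ?_
  rw [kleinMap_image_carrier]
  exact ⟨hy, h⟩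

variable (P) in
/-- The part of `P̄` lying on all the hyperplanes with index in `S`. -/
def faceOf (S : Finset (Fin P.m)) : Set (EuclideanSpace ℝ (Fin n)) :=
  {y ∈ P.cl | ∀ i ∈ S, mink (P.e i) (homog y) = 0}

theorem isExposed_faceOf (S : Finset (Fin P.m)) : IsExposed ℝ P.cl (P.faceOf S) := by
  rintro ⟨z, hz, hzS⟩
  let l : StrongDual ℝ (EuclideanSpace ℝ (Fin n)) := ∑ i ∈ S, innerSL ℝ (spatial (P.e i))
  have hl : ∀ y, l y = ∑ i ∈ S, mink (P.e i) (homog y) + ∑ i ∈ S, P.e i 0 := by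
    intro y
    rw [← Finset.sum_add_distrib]
    simp [l, mink_homog]
  have hle : ∀ y ∈ P.cl, ∑ i ∈ S, mink (P.e i) (homog y) ≤ 0 := fun y hy =>
    Finset.sum_nonpos fun i _ => mink_nonpos_of_mem_cl hy i
  refine ⟨l, Set.ext fun y => ⟨fun hy => ⟨hy.1, fun x hx => ?_⟩, fun hy => ⟨hy.1, ?_⟩⟩⟩
  · rw [hl, hl, Finset.sum_eq_zero hy.2]
    linarith [hle x hx]
  · have := hy.2 z hz
    rw [hl, hl, Finset.sum_eq_zero hzS] at this
    exact (Finset.sum_eq_zero_iff_of_nonpos fun i _ => mink_nonpos_of_mem_cl hy.1 i).1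
      (le_antisymm (hle y hy.1) (by linarith))

theorem kleinMap_mem_faceOf {S : Finset (Fin P.m)} {z : Fin (n + 1) → ℝ} (hz : Timelike z)
    (hle : ∀ i, mink (P.e i) z ≤ 0) (hzS : ∀ i ∈ S, mink (P.e i) z = 0) :
    kleinMap z ∈ P.faceOf S := by
  have hinv : 0 < (z 0)⁻¹ := inv_pos.2 hz.pos
  refine ⟨mem_cl_of_norm_lt (timelike_homog.1 ?_) fun i => ?_, fun i hi => ?_⟩
  · rw [hz.homog_kleinMap]; exact hz.smul hinv
  · rw [hz.homog_kleinMap, mink_smul_right]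
    exact mul_nonpos_of_nonneg_of_nonpos hinv.le (hle i)
  · rw [hz.homog_kleinMap, mink_smul_right, hzS i hi, mul_zero]

/-- The dimension of a face having a relatively interior point in hyperbolic space. -/
theorem sdim_faceOf_add_card {S : Finset (Fin P.m)} {z : Fin (n + 1) → ℝ} (hz : Timelike z)
    (hzS : ∀ i ∈ S, mink (P.e i) z = 0) (hli : LinearIndependent ℝ fun i : S => P.e i)
    (hev : ∀ᶠ x in 𝓝 z, (∀ i ∈ S, mink (P.e i) x = 0) → ∀ i, mink (P.e i) x ≤ 0) :
    sdim (P.faceOf S) + S.card = n := by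
  have hz0 := hz.pos
  set y := kleinMap z with hy
  have hhom : z 0 • homog y = z := by rw [hy, hz.homog_kleinMap, smul_inv_smul₀ hz0.ne']
  have hcont : Tendsto (fun y' : EuclideanSpace ℝ (Fin n) => z 0 • homog y') (𝓝 y) (𝓝 z) := by
    have : Continuous fun y' : EuclideanSpace ℝ (Fin n) => z 0 • homog y' := by
      have := continuous_homog (n := n)
      fun_prop
    simpa only [hhom] using this.tendsto y
  have hnear : ∀ᶠ y' in 𝓝 y, (∀ i ∈ S, mink (P.e i) (homog y') = 0) → y' ∈ P.faceOf S := by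
    filter_upwards [hcont.eventually hev, hcont.eventually (isOpen_timelike.mem_nhds hz)]
      with y' h1 h2 h3
    refine ⟨mem_cl_of_norm_lt (timelike_homog.1 ?_) fun i => ?_, h3⟩
    · simpa [smul_smul, hz0.ne'] using Timelike.smul h2 (inv_pos.2 hz0)
    · have := h1 (fun i hi => by rw [mink_smul_right, h3 i hi, mul_zero]) i
      rw [mink_smul_right] at this
      exact nonpos_of_mul_nonpos_right this hz0
  have hyF : y ∈ P.faceOf S := hnear.self_of_nhds fun i hi => by
    rw [hy, hz.homog_kleinMap, mink_smul_right, hzS i hi, mul_zero]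
  let W := Submodule.span ℝ (Set.range fun i : S => spatial (P.e i))
  have hW : ∀ d, d ∈ Wᗮ ↔ ∀ i ∈ S, inner ℝ (spatial (P.e i)) d = 0 := by
    intro d
    constructor
    · intro h i hi
      exact (Submodule.mem_orthogonal _ _).1 h _ (Submodule.subset_span ⟨⟨i, hi⟩, rfl⟩)
    · intro h
      refine (Submodule.mem_orthogonal _ _).2 fun u hu => ?_
      induction hu using Submodule.span_induction with
      | mem u hu => obtain ⟨i, rfl⟩ := hu; exact h i i.2
      | zero => simp
      | add u v _ _ hu hv => rw [inner_add_left, hu, hv, add_zero]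
      | smul c u _ hu => rw [inner_smul_left, hu, mul_zero]
  have hspan : vectorSpan ℝ (P.faceOf S) = Wᗮ := by
    refine le_antisymm ?_ fun d hd => ?_
    · refine Submodule.span_le.2 ?_
      rintro _ ⟨a, ha, b, hb, rfl⟩
      refine (hW _).2 fun i hi => ?_
      have h1 := ha.2 i hi
      have h2 := hb.2 i hi
      rw [mink_homog] at h1 h2
      simp only [vsub_eq_sub, inner_sub_right]; linarith
    · have hc : Tendsto (fun t : ℝ => y + t • d) (𝓝[>] 0) (𝓝 y) := by
        have : Continuous fun t : ℝ => y + t • d := by fun_prop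
        simpa using (this.tendsto 0).mono_left nhdsWithin_le_nhds
      obtain ⟨t, ht, ht0⟩ := ((hc.eventually hnear).and self_mem_nhdsWithin).exists
      have hmem : y + t • d ∈ P.faceOf S := ht fun i hi => by
        have h1 := hyF.2 i hi
        rw [mink_homog] at h1 ⊢
        rw [inner_add_right, inner_smul_right, (hW d).1 hd i hi]; linarith
      have h2 := vsub_mem_vectorSpan ℝ hmem hyF
      rw [vsub_eq_sub, add_sub_cancel_left] at h2
      exact (Submodule.smul_mem_iff _ (ne_of_gt (mem_Ioi.1 ht0))).1 h2
  have hli' : LinearIndependent ℝ fun i : S => spatial (P.e i) := by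
    rw [Fintype.linearIndependent_iff] at hli ⊢
    intro c hc
    refine hli c ?_
    have hsp : spatial (∑ i, c i • P.e i) = 0 := by
      rw [← hc]; ext j; simp [spatial]
    have hm : mink (∑ i, c i • P.e i) z = 0 := by
      rw [mink_sum_left]
      exact Finset.sum_eq_zero fun i _ => by rw [mink_smul_left, hzS i i.2, mul_zero]
    rw [mink_eq, hsp, inner_zero_left, add_zero, neg_eq_zero, mul_eq_zero] at hm
    refine eq_of_spatial ((hm.resolve_right hz0.ne').trans rfl) ?_
    rw [hsp]; ext; simp [spatial]
  have h1 : Module.finrank ℝ W = S.card := by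
    rw [finrank_span_eq_card hli', Fintype.card_coe]
  have h2 := W.finrank_add_finrank_orthogonal
  rw [h1, finrank_euclideanSpace_fin] at h2
  rw [sdim, hspan, add_comm, h2]

/-- Right-angledness, phrased through a relatively interior point of the common face. -/
theorem IsRightAngled.mink_eq_zero (hra : P.IsRightAngled) {i j : Fin P.m} (hij : i ≠ j)
    (hli : LinearIndependent ℝ ![P.e i, P.e j]) {z : Fin (n + 1) → ℝ} (hz : Timelike z)
    (hi : mink (P.e i) z = 0) (hj : mink (P.e j) z = 0)
    (hev : ∀ᶠ x in 𝓝 z, mink (P.e i) x = 0 → mink (P.e j) x = 0 → ∀ l, mink (P.e l) x ≤ 0) :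
    mink (P.e i) (P.e j) = 0 := by
  have hS : ∀ i' ∈ ({i, j} : Finset (Fin P.m)), mink (P.e i') z = 0 := by simp [hi, hj]
  have hdim := sdim_faceOf_add_card (S := {i, j}) hz hS ?_ ?_
  · rw [Finset.card_pair hij] at hdim
    refine hra i j hij ⟨P.faceOf {i, j}, ⟨isExposed_faceOf _,
      ⟨_, kleinMap_mem_faceOf hz (hev.self_of_nhds hi hj) hS⟩, by omega⟩, ?_, ?_⟩ <;>
    · rintro x ⟨⟨hx1, hx0⟩, -⟩ hxF
      have hT : Timelike x := timelike_iff.2 ⟨by rw [hx1]; norm_num, hx0⟩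
      have h1 := hxF.2
      rw [hT.homog_kleinMap] at h1
      simp only [Finset.mem_insert, Finset.mem_singleton, forall_eq_or_imp, forall_eq,
        mink_smul_right, mul_eq_zero, inv_eq_zero, hx0.ne', false_or] at h1
      tauto
  · rw [LinearIndependent.pair_iff] at hli
    rw [Fintype.linearIndependent_iff]
    intro c hc
    rw [Finset.sum_coe_sort_eq_attach] at hc
    have hc' : ∑ l ∈ ({i, j} : Finset (Fin P.m)),
        (if h : l ∈ ({i, j} : Finset (Fin P.m)) then c ⟨l, h⟩ else 0) • P.e l = 0 := by
      rw [← hc, ← Finset.sum_attach]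
      exact Finset.sum_congr rfl fun l _ => by rw [dif_pos l.2]
    rw [Finset.sum_pair hij] at hc'
    have := hli _ _ hc'
    simp only [Finset.mem_insert, Finset.mem_singleton, true_or, or_true, dite_true] at this
    rintro ⟨l, hl⟩
    rcases Finset.mem_insert.1 hl with rfl | h
    · exact this.1
    · obtain rfl := Finset.mem_singleton.1 h
      exact this.2
  · filter_upwards [hev] with x hx h
    exact hx (h i (by simp)) (h j (by simp))

end HypPolyhedron

theorem Timelike.sub {n : ℕ} {x u : Fin (n + 1) → ℝ} (hx : Timelike x)
    (hu : mink u (x - u) = 0) (huu : 0 ≤ mink u u) : Timelike (x - u) := by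
  have h1 : mink x (x - u) = mink x x - mink u u := by
    rw [mink_sub_right, mink_comm x u]
    rw [mink_sub_right] at hu
    linarith
  have h2 := hx.mink_self_neg
  refine hx.of_mink_neg ?_ (by linarith)
  rw [mink_sub_left, hu]; linarith

namespace HypPolyhedron

open Set Filter Topology

variable {n : ℕ} {P : HypPolyhedron n}

namespace IsIrredundant

variable {E : Finset (Fin P.m)}

theorem linearIndependent_pair (hE : P.IsIrredundant E)
    {i j : Fin P.m} (hi : i ∈ E) (hj : j ∈ E) (hij : i ≠ j) :
    LinearIndependent ℝ ![P.e i, P.e j] := by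
  obtain ⟨w, -, hw, hws⟩ := hE.witness i hi
  obtain ⟨w', -, hw', hws'⟩ := hE.witness j hj
  refine LinearIndependent.pair_iff.2 fun s t hst => ⟨?_, ?_⟩
  · have h := congrArg (fun u => mink u w') hst
    simp only [mink_add_left, mink_smul_left, mink_zero_left, hw', mul_zero, add_zero] at h
    exact (mul_eq_zero.1 h).resolve_right (hws' i hi hij).ne
  · have h := congrArg (fun u => mink u w) hst
    simp only [mink_add_left, mink_smul_left, mink_zero_left, hw, mul_zero, zero_add] at h
    exact (mul_eq_zero.1 h).resolve_right (hws j hj hij.symm).ne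

/-- Strictness of the inequalities away from a subset `S` is an open condition. -/
theorem eventually_le_zero (hE : P.IsIrredundant E)
    {S : Finset (Fin P.m)} {z : Fin (n + 1) → ℝ} (hz : Timelike z)
    (hlt : ∀ l ∈ E, l ∉ S → mink (P.e l) z < 0) :
    ∀ᶠ x in 𝓝 z, (∀ i ∈ S, mink (P.e i) x = 0) → ∀ i, mink (P.e i) x ≤ 0 := by
  have h : ∀ᶠ x in 𝓝 z, ∀ l ∈ E, l ∉ S → mink (P.e l) x < 0 := by
    refine (Finset.eventually_all E).2 fun l hl => ?_
    by_cases hS : l ∈ S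
    · exact Eventually.of_forall fun x h => absurd hS h
    · filter_upwards [(continuous_mink (P.e l)).tendsto z |>.eventually_lt_const (hlt l hl hS)]
        with x hx _ using hx
  filter_upwards [h, isOpen_timelike.mem_nhds hz] with x hx hT hS
  refine hE.le_zero x hT fun l hl => ?_
  by_cases h : l ∈ S
  · exact (hS l h).le
  · exact (hx l hl h).le

/-- A right-angled polyhedron is stable under projection to its facet hyperplanes. -/
theorem mink_proj_nonpos (hE : P.IsIrredundant E)
    (hra : P.IsRightAngled) {i : Fin P.m} (hi : i ∈ E)
    {x : Fin (n + 1) → ℝ} (hx : Timelike x) (hxP : ∀ l, mink (P.e l) x ≤ 0) (l : Fin P.m) :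
    mink (P.e l) (x - mink (P.e i) x • P.e i) ≤ 0 := by
  obtain ⟨w, hw, hwi, hws⟩ := hE.witness i hi
  have hK : Convex ℝ ({x | Timelike x} ∩ {x | minkL (P.e i) x = 0}) :=
    convex_timelike.inter (convex_hyperplane (minkL (P.e i)).isLinear 0)
  obtain ⟨N, hNs, hN, hNw⟩ := exists_irredundant (fun j => minkL (P.e j)) hK (E.erase i)
    ⟨hw, hwi⟩ fun j hj => hws j (Finset.mem_of_mem_erase hj) (Finset.ne_of_mem_erase hj)
  have hNle : ∀ x, Timelike x → mink (P.e i) x = 0 → (∀ j ∈ N, mink (P.e j) x ≤ 0) →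
      ∀ l, mink (P.e l) x ≤ 0 := by
    intro x hx hxi hxN
    refine hE.le_zero x hx fun l hl => ?_
    by_cases hli : l = i
    · rw [hli, hxi]
    · exact hN x ⟨hx, hxi⟩ hxN l (Finset.mem_erase.2 ⟨hli, hl⟩)
  have horth : ∀ j ∈ N, mink (P.e i) (P.e j) = 0 := by
    intro j hj
    have hj' := Finset.mem_erase.1 (hNs hj)
    obtain ⟨z, ⟨hz, hzi⟩, hzj, hzl⟩ := hNw j hj
    refine hra.mink_eq_zero hj'.1.symm (hE.linearIndependent_pair hi hj'.2 hj'.1.symm) hz hzi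
      hzj ?_
    have h : ∀ᶠ x in 𝓝 z, ∀ l ∈ N, l ≠ j → mink (P.e l) x < 0 := by
      refine (Finset.eventually_all N).2 fun l hl => ?_
      by_cases hlj : l = j
      · exact Eventually.of_forall fun x h => absurd hlj h
      · filter_upwards [(continuous_mink (P.e l)).tendsto z |>.eventually_lt_const
          (hzl l hl hlj)] with x hx _ using hx
    filter_upwards [h, isOpen_timelike.mem_nhds hz] with x hx hT hxi hxj
    refine hNle x hT hxi fun l hl => ?_
    by_cases hlj : l = j
    · rw [hlj, hxj]
    · exact (hx l hl hlj).le
  have hpi : mink (P.e i) (x - mink (P.e i) x • P.e i) = 0 := by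
    rw [mink_sub_right, mink_smul_right, P.unit]; ring
  refine hNle _ (hx.sub ?_ ?_) hpi (fun j hj => ?_) l
  · rw [mink_smul_left, hpi, mul_zero]
  · rw [mink_smul_left, mink_smul_right, P.unit, mul_one]
    exact mul_self_nonneg _
  · rw [mink_sub_right, mink_smul_right, mink_comm (P.e j) (P.e i), horth j hj, mul_zero, sub_zero]
    exact hxP j

theorem mink_nonpos (hE : P.IsIrredundant E)
    (hra : P.IsRightAngled) {i j : Fin P.m} (hi : i ∈ E) (hj : j ∈ E)
    (hij : i ≠ j) : mink (P.e i) (P.e j) ≤ 0 := by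
  obtain ⟨w, hw, hwj, hws⟩ := hE.witness j hj
  have hle : ∀ l ∈ E, mink (P.e l) w ≤ 0 := fun l hl => by
    by_cases h : l = j
    · rw [h, hwj]
    · exact (hws l hl h).le
  have h := hE.mink_proj_nonpos hra hi hw (hE.le_zero w hw hle) j
  rw [mink_sub_right, mink_smul_right, hwj, mink_comm (P.e j)] at h
  nlinarith [hws i hi hij]

theorem mink_eq_zero_of_neg_one_lt (hE : P.IsIrredundant E)
    (hra : P.IsRightAngled) {i j : Fin P.m} (hi : i ∈ E)
    (hj : j ∈ E) (hij : i ≠ j) (h : -1 < mink (P.e i) (P.e j)) : mink (P.e i) (P.e j) = 0 := by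
  obtain ⟨y₀, hy₀, hs⟩ := P.exists_strict_point
  set x := homog y₀
  have hx : Timelike x := timelike_homog.2 hy₀
  have hc := hE.mink_nonpos hra hi hj hij
  set c := mink (P.e i) (P.e j) with hcdef
  have hc' : mink (P.e j) (P.e i) = c := mink_comm _ _
  have hd : 0 < 1 - c ^ 2 := by nlinarith
  have ha := hs i
  have hb := hs j
  set a := mink (P.e i) x
  set b := mink (P.e j) x
  set α := (a - c * b) / (1 - c ^ 2) with hα
  set β := (b - c * a) / (1 - c ^ 2) with hβ
  have hα0 : α < 0 := div_neg_of_neg_of_pos (by nlinarith) hd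
  have hβ0 : β < 0 := div_neg_of_neg_of_pos (by nlinarith) hd
  have hab1 : a - (α + β * c) = 0 := by rw [hα, hβ]; field_simp; ring
  have hab2 : b - (α * c + β) = 0 := by rw [hα, hβ]; field_simp; ring
  set u := α • P.e i + β • P.e j with hu
  have hui : mink (P.e i) (x - u) = 0 := by
    rw [mink_sub_right, hu, mink_add_right, mink_smul_right, mink_smul_right, P.unit, mul_one]
    exact hab1
  have huj : mink (P.e j) (x - u) = 0 := by
    rw [mink_sub_right, hu, mink_add_right, mink_smul_right, mink_smul_right, P.unit, mul_one,
      hc']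
    exact hab2
  have huT : Timelike (x - u) := by
    refine hx.sub ?_ ?_
    · rw [mink_add_left, mink_smul_left, mink_smul_left, hui, huj]; ring
    · simp only [hu, mink_add_left, mink_add_right, mink_smul_left, mink_smul_right, P.unit, hc',
        ← hcdef]
      nlinarith [sq_nonneg (α - β), mul_pos_of_neg_of_neg hα0 hβ0]
  refine hra.mink_eq_zero hij (hE.linearIndependent_pair hi hj hij) huT hui huj ?_
  have hlt : ∀ l ∈ E, l ∉ ({i, j} : Finset (Fin P.m)) → mink (P.e l) (x - u) < 0 := by
    intro l hl hlS
    simp only [Finset.mem_insert, Finset.mem_singleton, not_or] at hlS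
    have h1 := hE.mink_nonpos hra hl hi hlS.1
    have h2 := hE.mink_nonpos hra hl hj hlS.2
    rw [mink_sub_right, hu, mink_add_right, mink_smul_right, mink_smul_right]
    nlinarith [hs l, mul_nonneg_of_nonpos_of_nonpos hα0.le h1,
      mul_nonneg_of_nonpos_of_nonpos hβ0.le h2]
  filter_upwards [hE.eventually_le_zero huT hlt] with z hz hzi hzj
  exact hz (by simp [hzi, hzj])

theorem mink_eq_zero_of_common_point (hE : P.IsIrredundant E)
    (hra : P.IsRightAngled) {i j : Fin P.m} (hi : i ∈ E)
    (hj : j ∈ E) (hij : i ≠ j) {w : Fin (n + 1) → ℝ} (hw : Timelike w)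
    (hwi : mink (P.e i) w = 0) (hwj : mink (P.e j) w = 0) : mink (P.e i) (P.e j) = 0 := by
  refine hE.mink_eq_zero_of_neg_one_lt hra hi hj hij ?_
  obtain ⟨y₀, hy₀, hs⟩ := P.exists_strict_point
  have hne : P.e i + P.e j ≠ 0 := fun h => by
    have h1 := congrArg (fun u => mink u (homog y₀)) h
    simp only [mink_add_left, mink_zero_left] at h1
    linarith [hs i, hs j]
  have h := hw.mink_self_pos (y := P.e i + P.e j)
    (by rw [mink_comm, mink_add_left, hwi, hwj, add_zero]) hne
  simp only [mink_add_left, mink_add_right, P.unit, mink_comm (P.e j) (P.e i)] at h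
  linarith

/-- Pairwise orthogonal walls meet in a face with a point lying on no other wall. -/
theorem exists_relint_point (hE : P.IsIrredundant E)
    (hra : P.IsRightAngled) {S : Finset (Fin P.m)} (hS : S ⊆ E)
    (hSo : ∀ i ∈ S, ∀ j ∈ S, i ≠ j → mink (P.e i) (P.e j) = 0) :
    ∃ f, Timelike f ∧ (∀ i ∈ S, mink (P.e i) f = 0) ∧
      ∀ l ∈ E, l ∉ S → mink (P.e l) f < 0 := by
  obtain ⟨y₀, hy₀, hs⟩ := P.exists_strict_point
  set x := homog y₀
  have hx : Timelike x := timelike_homog.2 hy₀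
  set u := ∑ i ∈ S, mink (P.e i) x • P.e i with hu
  have hui : ∀ i ∈ S, mink (P.e i) (x - u) = 0 := by
    intro i hi
    rw [mink_sub_right, hu, mink_sum_right, Finset.sum_eq_single i]
    · rw [mink_smul_right, P.unit]; ring
    · intro j hj hji
      rw [mink_smul_right, hSo i hi j hj hji.symm, mul_zero]
    · exact fun h => absurd hi h
  have hux : mink u (x - u) = 0 := by
    rw [hu, mink_sum_left]
    exact Finset.sum_eq_zero fun i hi => by rw [mink_smul_left, hui i hi, mul_zero]
  refine ⟨x - u, hx.sub hux ?_, hui, fun l hl hlS => ?_⟩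
  · have h1 : mink u u = mink u x := by rw [mink_sub_right] at hux; linarith
    rw [h1, hu, mink_sum_left]
    exact Finset.sum_nonneg fun i _ => by rw [mink_smul_left]; exact mul_self_nonneg _
  · have h1 : 0 ≤ mink (P.e l) u := by
      rw [hu, mink_sum_right]
      refine Finset.sum_nonneg fun i hi => ?_
      rw [mink_smul_right]
      exact mul_nonneg_of_nonpos_of_nonpos (hs i).le
        (hE.mink_nonpos hra hl (hS hi) fun h => hlS (h ▸ hi))
    rw [mink_sub_right]; linarith [hs l]

end IsIrredundant

theorem linearIndependent_of_orthogonal {S : Finset (Fin P.m)}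
    (hSo : ∀ i ∈ S, ∀ j ∈ S, i ≠ j → mink (P.e i) (P.e j) = 0) :
    LinearIndependent ℝ fun i : S => P.e i := by
  refine Fintype.linearIndependent_iff.2 fun c hc i => ?_
  have h := congrArg (mink (P.e i)) hc
  rw [mink_sum_right, mink_zero_right, Finset.sum_eq_single i] at h
  · rwa [mink_smul_right, P.unit, mul_one] at h
  · intro j _ hji
    rw [mink_smul_right, hSo i i.2 j j.2 fun h => hji (Subtype.ext h.symm), mul_zero]
  · simp

theorem IsIrredundant.sdim_faceOf {E : Finset (Fin P.m)} (hE : P.IsIrredundant E)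
    (hra : P.IsRightAngled) {S : Finset (Fin P.m)} (hS : S ⊆ E)
    (hSo : ∀ i ∈ S, ∀ j ∈ S, i ≠ j → mink (P.e i) (P.e j) = 0) :
    sdim (P.faceOf S) + S.card = n := by
  obtain ⟨f, hf, hfS, hfl⟩ := hE.exists_relint_point hra hS hSo
  exact sdim_faceOf_add_card hf hfS (linearIndependent_of_orthogonal hSo)
    (hE.eventually_le_zero hf hfl)

end HypPolyhedron

namespace HypPolyhedron

open Set Filter Topology

variable {n : ℕ} {P : HypPolyhedron n}

variable (P) in
/-- The members of `E` whose hyperplanes pass through `v`. -/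
noncomputable def active (E : Finset (Fin P.m)) (v : EuclideanSpace ℝ (Fin n)) : Finset (Fin P.m) :=
  {i ∈ E | mink (P.e i) (homog v) = 0}

theorem mem_active {E : Finset (Fin P.m)} {v : EuclideanSpace ℝ (Fin n)} {i : Fin P.m} :
    i ∈ P.active E v ↔ i ∈ E ∧ mink (P.e i) (homog v) = 0 := by
  simp [active]

namespace IsIrredundant

variable {E : Finset (Fin P.m)}

theorem convex_cl (hE : P.IsIrredundant E) : Convex ℝ P.cl := by
  rw [hE.cl_eq]
  rintro y ⟨hy, hyE⟩ z ⟨hz, hzE⟩ a b ha hb hab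
  refine ⟨?_, fun i hi => ?_⟩
  · simpa using convex_closedBall (0 : EuclideanSpace ℝ (Fin n)) 1
      (mem_closedBall_zero_iff.2 hy) (mem_closedBall_zero_iff.2 hz) ha hb hab
  · rw [homog_combo hab, mink_add_right, mink_smul_right, mink_smul_right]
    exact add_nonpos (mul_nonpos_of_nonneg_of_nonpos ha (hyE i hi))
      (mul_nonpos_of_nonneg_of_nonpos hb (hzE i hi))

/-- An exposed face containing a relatively interior point of `P.faceOf S` contains all of it. -/
theorem faceOf_subset (hE : P.IsIrredundant E) {F : Set (EuclideanSpace ℝ (Fin n))}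
    (hF : IsExposed ℝ P.cl F) {S : Finset (Fin P.m)} {f : EuclideanSpace ℝ (Fin n)} (hf : f ∈ F)
    (hf1 : ‖f‖ < 1) (hfS : ∀ i ∈ S, mink (P.e i) (homog f) = 0)
    (hlt : ∀ i ∈ E, i ∉ S → mink (P.e i) (homog f) < 0) : P.faceOf S ⊆ F := by
  intro y hy
  obtain ⟨l, rfl⟩ := hF ⟨f, hf⟩
  refine ⟨hy.1, fun z hz => (hf.2 z hz).trans ?_⟩
  have hq : Continuous fun t : ℝ => (1 + t) • f + (-t) • y := by fun_prop
  have hq0 : Tendsto (fun t : ℝ => (1 + t) • f + (-t) • y) (𝓝[>] 0) (𝓝 f) := by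
    simpa using (hq.tendsto 0).mono_left nhdsWithin_le_nhds
  have hev : ∀ᶠ t : ℝ in 𝓝[>] 0, ∀ i ∈ E,
      mink (P.e i) (homog ((1 + t) • f + (-t) • y)) ≤ 0 := by
    refine (Finset.eventually_all E).2 fun i hi => ?_
    by_cases hiS : i ∈ S
    · refine Eventually.of_forall fun t => ?_
      rw [homog_combo (by ring), mink_add_right, mink_smul_right, mink_smul_right, hfS i hiS,
        hy.2 i hiS]
      simp
    · have hc := ((continuous_mink (P.e i)).comp continuous_homog).tendsto f
      exact ((hc.comp hq0).eventually_lt_const (hlt i hi hiS)).mono fun t ht => ht.le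
  have hnorm : ∀ᶠ t : ℝ in 𝓝[>] 0, ‖(1 + t) • f + (-t) • y‖ < 1 :=
    ((continuous_norm.tendsto f).comp hq0).eventually_lt_const hf1
  obtain ⟨t, ⟨ht1, ht2⟩, ht0⟩ := ((hev.and hnorm).and self_mem_nhdsWithin).exists
  have hmem : (1 + t) • f + (-t) • y ∈ P.cl := by
    rw [hE.cl_eq]; exact ⟨ht2.le, ht1⟩
  have := hf.2 _ hmem
  simp only [map_add, map_smul, smul_eq_mul] at this
  have ht0 : 0 < t := ht0
  nlinarith

/-- An exposed face through `v` that is not reduced to `v` is cut out by walls through `v`. -/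
theorem exists_eq_faceOf (hE : P.IsIrredundant E) {F : Set (EuclideanSpace ℝ (Fin n))}
    (hF : IsExposed ℝ P.cl F) {v p : EuclideanSpace ℝ (Fin n)} (hv : v ∈ F) (hp : p ∈ F)
    (hpv : p ≠ v) :
    ∃ S ⊆ P.active E v, F = P.faceOf S ∧
      ∃ f, Timelike f ∧ ∀ i ∈ S, mink (P.e i) f = 0 := by
  classical
  have hconv : Convex ℝ F := hF.convex hE.convex_cl
  have hsub : F ⊆ P.cl := hF.subset
  set A := P.active E v with hA
  let S := {i ∈ A | ∀ y ∈ F, mink (P.e i) (homog y) = 0}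
  have half : ∀ a b : EuclideanSpace ℝ (Fin n), ∀ i : Fin P.m,
      mink (P.e i) (homog ((1 / 2 : ℝ) • a + (1 / 2 : ℝ) • b)) =
        (mink (P.e i) (homog a) + mink (P.e i) (homog b)) / 2 := by
    intro a b i
    rw [homog_combo (by norm_num), mink_add_right, mink_smul_right, mink_smul_right]; ring
  have hexists : ∀ B : Finset (Fin P.m), ∃ f ∈ F, ‖f‖ < 1 ∧
      (∀ i ∈ E, i ∉ A → mink (P.e i) (homog f) < 0) ∧
      ∀ i ∈ B, i ∈ A → i ∉ S → mink (P.e i) (homog f) < 0 := by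
    intro B
    induction B using Finset.induction_on with
    | empty =>
      refine ⟨(1 / 2 : ℝ) • v + (1 / 2 : ℝ) • p,
        hconv hv hp (by norm_num) (by norm_num) (by norm_num),
        norm_combo_lt_of_ne (norm_le_one_of_mem_cl (hsub hv)) (norm_le_one_of_mem_cl (hsub hp))
          hpv.symm (by norm_num) (by norm_num) (by norm_num), fun i hi hiA => ?_, by simp⟩
      have h1 : mink (P.e i) (homog v) < 0 :=
        lt_of_le_of_ne (mink_nonpos_of_mem_cl (hsub hv) i) fun h => hiA (mem_active.2 ⟨hi, h⟩)
      rw [half]; linarith [mink_nonpos_of_mem_cl (hsub hp) i]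
    | insert j B _ ih =>
      obtain ⟨f, hf, hf1, hfA, hfB⟩ := ih
      by_cases hj : j ∈ A ∧ j ∉ S
      · have : ∃ y ∈ F, mink (P.e j) (homog y) ≠ 0 := by
          by_contra! h
          exact hj.2 (Finset.mem_filter.2 ⟨hj.1, h⟩)
        obtain ⟨y, hy, hyj⟩ := this
        have hyj' := lt_of_le_of_ne (mink_nonpos_of_mem_cl (hsub hy) j) hyj
        refine ⟨(1 / 2 : ℝ) • f + (1 / 2 : ℝ) • y,
          hconv hf hy (by norm_num) (by norm_num) (by norm_num), ?_, fun i hi hiA => ?_,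
          fun i hi hiA hiS => ?_⟩
        · have h1 := norm_add_le ((1 / 2 : ℝ) • f) ((1 / 2 : ℝ) • y)
          rw [norm_smul, norm_smul, Real.norm_of_nonneg (by norm_num)] at h1
          linarith [norm_le_one_of_mem_cl (hsub hy)]
        · rw [half]; linarith [hfA i hi hiA, mink_nonpos_of_mem_cl (hsub hy) i]
        · rw [half]
          rcases Finset.mem_insert.1 hi with rfl | hi
          · linarith [mink_nonpos_of_mem_cl (hsub hf) i]
          · linarith [hfB i hi hiA hiS, mink_nonpos_of_mem_cl (hsub hy) i]
      · refine ⟨f, hf, hf1, hfA, fun i hi hiA hiS => ?_⟩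
        rcases Finset.mem_insert.1 hi with rfl | hi
        · exact absurd ⟨hiA, hiS⟩ hj
        · exact hfB i hi hiA hiS
  obtain ⟨f, hf, hf1, hfA, hfB⟩ := hexists A
  have hfS : ∀ i ∈ S, mink (P.e i) (homog f) = 0 := fun i hi => (Finset.mem_filter.1 hi).2 f hf
  refine ⟨S, Finset.filter_subset _ _, ?_, homog f, timelike_homog.2 hf1, hfS⟩
  refine subset_antisymm
    (fun y hy => ⟨hsub hy, fun i hi => (Finset.mem_filter.1 hi).2 y hy⟩) fun y hy => ?_
  refine hE.faceOf_subset hF hf hf1 hfS (fun i hi hiS => ?_) hy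
  by_cases hiA : i ∈ A
  · exact hfB i hiA hiA hiS
  · exact hfA i hi hiA

open Classical in
/-- The `k`-faces through `v` correspond to the sets of `n - k` pairwise orthogonal walls
through `v`. -/
theorem ncard_faces_through (hE : P.IsIrredundant E) (hra : P.IsRightAngled) {k : ℕ}
    (hk : 1 ≤ k) (hkn : k ≤ n) {v : EuclideanSpace ℝ (Fin n)} (hv : v ∈ P.cl) :
    {F ∈ P.faces k | v ∈ F}.ncard =
      {S ∈ (P.active E v).powersetCard (n - k) |
        ∀ i ∈ S, ∀ j ∈ S, i ≠ j → mink (P.e i) (P.e j) = 0}.card := by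
  have hAE : P.active E v ⊆ E := Finset.filter_subset _ _
  rw [← ncard_coe_finset, ← InjOn.ncard_image (f := P.faceOf)]
  · congr 1
    ext F
    simp only [Finset.coe_filter, Finset.mem_powersetCard, mem_image]
    constructor
    · rintro ⟨⟨hF, hne, hdim⟩, hvF⟩
      have : ∃ p ∈ F, p ≠ v := by
        by_contra! h
        have : F = {v} := subset_antisymm (fun p hp => h p hp) (by simpa using hvF)
        rw [this, sdim, vectorSpan_singleton, finrank_bot] at hdim
        omega
      obtain ⟨p, hp, hpv⟩ := this
      obtain ⟨S, hSA, rfl, f, hf, hfS⟩ := hE.exists_eq_faceOf hF hvF hp hpv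
      have hSo : ∀ i ∈ S, ∀ j ∈ S, i ≠ j → mink (P.e i) (P.e j) = 0 := fun i hi j hj hij =>
        hE.mink_eq_zero_of_common_point hra (hAE (hSA hi)) (hAE (hSA hj)) hij hf (hfS i hi)
          (hfS j hj)
      have := hE.sdim_faceOf hra (hSA.trans hAE) hSo
      exact ⟨S, ⟨⟨hSA, by omega⟩, hSo⟩, rfl⟩
    · rintro ⟨S, ⟨⟨hSA, hcard⟩, hSo⟩, rfl⟩
      have hdim := hE.sdim_faceOf hra (hSA.trans hAE) hSo
      have hvF : v ∈ P.faceOf S := ⟨hv, fun i hi => (mem_active.1 (hSA hi)).2⟩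
      exact ⟨⟨isExposed_faceOf S, ⟨v, hvF⟩, by omega⟩, hvF⟩
  · have hsub : ∀ S T : Finset (Fin P.m), S ⊆ E → T ⊆ E →
        (∀ i ∈ S, ∀ j ∈ S, i ≠ j → mink (P.e i) (P.e j) = 0) →
        P.faceOf S = P.faceOf T → T ⊆ S := by
      intro S T hS hT hSo hST i hi
      obtain ⟨f, hf, hfS, hfl⟩ := hE.exists_relint_point hra hS hSo
      have hle : ∀ l, mink (P.e l) f ≤ 0 := hE.le_zero f hf fun l hl => by
        by_cases h : l ∈ S
        · exact (hfS l h).le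
        · exact (hfl l hl h).le
      have hmem := kleinMap_mem_faceOf hf hle hfS
      rw [hST] at hmem
      by_contra h
      have h1 := hmem.2 i hi
      rw [hf.homog_kleinMap, mink_smul_right] at h1
      exact (mul_ne_zero (inv_ne_zero hf.pos.ne') (hfl i (hT hi) h).ne) h1
    intro S hS T hT hST
    simp only [Finset.coe_filter, Finset.mem_powersetCard, mem_ofPred_eq] at hS hT
    exact Finset.Subset.antisymm
      (hsub T S (hT.1.1.trans hAE) (hS.1.1.trans hAE) hT.2 hST.symm)
      (hsub S T (hS.1.1.trans hAE) (hT.1.1.trans hAE) hS.2 hST)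

end IsIrredundant

end HypPolyhedron

namespace HypPolyhedron

open Set Filter Topology

variable {n : ℕ} {P : HypPolyhedron n} {E : Finset (Fin P.m)} {v : EuclideanSpace ℝ (Fin n)}

theorem mem_cl_of_mem_verts (hv : v ∈ P.verts) : v ∈ P.cl :=
  (show IsExposed ℝ P.cl {v} from hv).subset rfl

namespace IsIrredundant

theorem mink_eq_zero_of_active_finite (hE : P.IsIrredundant E) (hra : P.IsRightAngled)
    (hv : ‖v‖ < 1) {i j : Fin P.m} (hi : i ∈ P.active E v) (hj : j ∈ P.active E v)
    (hij : i ≠ j) : mink (P.e i) (P.e j) = 0 :=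
  hE.mink_eq_zero_of_common_point hra (mem_active.1 hi).1 (mem_active.1 hj).1 hij
    (timelike_homog.2 hv) (mem_active.1 hi).2 (mem_active.1 hj).2

/-- Exactly `n` walls pass through a finite vertex. -/
theorem card_active_finite (hE : P.IsIrredundant E) (hra : P.IsRightAngled)
    (hv : v ∈ P.finiteVerts) : (P.active E v).card = n := by
  have hvE : IsExposed ℝ P.cl {v} := hv.1
  have hvcl := mem_cl_of_mem_verts hv.1
  have hdim := hE.sdim_faceOf hra (S := P.active E v) (Finset.filter_subset _ _)
    fun i hi j hj hij => hE.mink_eq_zero_of_active_finite hra hv.2 hi hj hij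
  have hF : P.faceOf (P.active E v) = {v} := by
    refine subset_antisymm (hE.faceOf_subset hvE rfl hv.2 (fun i hi => (mem_active.1 hi).2)
      fun i hi hiA => ?_) (by
        rintro _ rfl; exact ⟨hvcl, fun i hi => (mem_active.1 hi).2⟩)
    exact lt_of_le_of_ne (mink_nonpos_of_mem_cl hvcl i) fun h => hiA (mem_active.2 ⟨hi, h⟩)
  rw [hF, sdim, vectorSpan_singleton, finrank_bot] at hdim
  omega

/-- The link of an ideal vertex of a finite-volume polyhedron is bounded: no spacelike direction
tangent to the light cone stays on the inner side of all walls through the vertex. -/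
theorem mink_self_nonpos_of_recession (hE : P.IsIrredundant E) (hfv : P.FiniteVolume)
    (hv : v ∈ P.idealVerts) {y : Fin (n + 1) → ℝ} (hy : mink (homog v) y = 0)
    (hyA : ∀ l ∈ P.active E v, mink (P.e l) y ≤ 0) : mink y y ≤ 0 := by
  by_contra! hyy
  have hv1 : ‖v‖ = 1 := hv.2
  have hvcl := mem_cl_of_mem_verts hv.1
  obtain ⟨y₀, hy₀, hs⟩ := P.exists_strict_point
  set x := homog y₀
  have hx : Timelike x := timelike_homog.2 hy₀
  have hb := hx.mink_ideal_neg hv1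
  obtain ⟨M, hM⟩ := (hfv.1.image
    fun q => mink y (homog q) / -mink (homog v) (homog q)).bddAbove
  have hcl : ∀ q ∈ P.cl, mink y (homog q) + M * mink (homog v) (homog q) ≤ 0 := by
    rw [hfv.2]
    refine fun q hq => convexHull_min
      (t := {q | mink y (homog q) + M * mink (homog v) (homog q) ≤ 0}) (fun q hq => ?_) ?_ hq
    · by_cases hqv : q = v
      · subst hqv
        change mink y (homog q) + M * mink (homog q) (homog q) ≤ 0
        rw [mink_comm y, hy, mink_self, spatial_homog, homog_zero, hv1]; simp
      · have hneg := mink_ideal_homog_neg hv1 (norm_le_one_of_mem_cl (mem_cl_of_mem_verts hq)) hqv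
        have := hM (mem_image_of_mem _ hq)
        rw [div_le_iff₀ (by linarith)] at this
        change mink y (homog q) + M * mink (homog v) (homog q) ≤ 0
        linarith
    · intro q hq r hr a b ha hb' hab
      change mink y (homog (a • q + b • r)) + M * mink (homog v) (homog (a • q + b • r)) ≤ 0
      have hq : mink y (homog q) + M * mink (homog v) (homog q) ≤ 0 := hq
      have hr : mink y (homog r) + M * mink (homog v) (homog r) ≤ 0 := hr
      simp only [homog_combo hab, mink_add_right, mink_smul_right]
      nlinarith [mul_nonpos_of_nonneg_of_nonpos ha hq, mul_nonpos_of_nonneg_of_nonpos hb' hr]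
  set t := (|mink y x + M * mink (homog v) x| + 1) / mink y y with ht
  have ht0 : 0 < t := by positivity
  have hty : t * mink y y = |mink y x + M * mink (homog v) x| + 1 := by
    rw [ht]; field_simp
  have hlin : ∀ c d : ℝ, d < 0 → ∀ᶠ s : ℝ in atTop, c + s * d < 0 := by
    intro c d hd
    filter_upwards [eventually_gt_atTop (c / -d)] with s hs'
    rw [div_lt_iff₀ (by linarith)] at hs'
    linarith
  have hvv : mink (homog v) (homog v) = 0 := by
    rw [mink_self, spatial_homog, homog_zero, hv1]; simp
  have hevE : ∀ᶠ s : ℝ in atTop, ∀ l ∈ E, mink (P.e l) (x + t • y + s • homog v) ≤ 0 := by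
    refine (Finset.eventually_all E).2 fun l hl => ?_
    simp only [mink_add_right, mink_smul_right]
    by_cases hlA : l ∈ P.active E v
    · refine Eventually.of_forall fun s => ?_
      rw [(mem_active.1 hlA).2]
      nlinarith [hs l, mul_nonpos_of_nonneg_of_nonpos ht0.le (hyA l hlA)]
    · refine (hlin _ _ ?_).mono fun s hs' => hs'.le
      exact lt_of_le_of_ne (mink_nonpos_of_mem_cl hvcl l) fun h => hlA (mem_active.2 ⟨hl, h⟩)
  obtain ⟨s, hsE, hs1, hs2⟩ := (hevE.and ((hlin (mink x x + t * mink x y) _ hb).and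
    (hlin (mink (x + t • y) (x + t • y)) (2 * mink (homog v) x) (by linarith)))).exists
  have hT : Timelike (x + t • y + s • homog v) := by
    refine hx.of_mink_neg ?_ ?_
    · have : mink (x + t • y + s • homog v) (x + t • y + s • homog v) =
          mink (x + t • y) (x + t • y) + s * (2 * mink (homog v) x) := by
        simp only [mink_add_left, mink_add_right, mink_smul_left, mink_smul_right, hy, hvv,
          mink_comm y (homog v), mink_comm x (homog v)]
        ring
      rw [this]; exact hs2
    · simp only [mink_add_right, mink_smul_right, mink_comm x (homog v)]; exact hs1
  have hmem := (kleinMap_mem_faceOf (S := ∅) hT (hE.le_zero _ hT hsE) (by simp)).1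
  have h := hcl _ hmem
  rw [hT.homog_kleinMap, mink_smul_right, mink_smul_right] at h
  have h' : mink y (x + t • y + s • homog v) + M * mink (homog v) (x + t • y + s • homog v) ≤ 0 :=
    nonpos_of_mul_nonpos_right (by linarith) (inv_pos.2 hT.pos)
  simp only [mink_add_right, mink_smul_right, hy, hvv, mink_comm y (homog v)] at h'
  linarith [neg_abs_le (mink y x + M * mink (homog v) x)]

theorem mink_eq_zero_or_of_active_ideal (hE : P.IsIrredundant E) (hra : P.IsRightAngled)
    (hv : ‖v‖ = 1) {i j : Fin P.m} (hi : i ∈ P.active E v) (hj : j ∈ P.active E v)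
    (hij : i ≠ j) : mink (P.e i) (P.e j) = 0 ∨ mink (P.e i) (P.e j) = -1 := by
  have hi' := mem_active.1 hi
  have hj' := mem_active.1 hj
  have h := mink_self_nonneg_of_orthogonal_ideal hv (y := P.e i + P.e j)
    (by rw [mink_comm, mink_add_left, hi'.2, hj'.2, add_zero])
  simp only [mink_add_left, mink_add_right, P.unit, mink_comm (P.e j) (P.e i)] at h
  rcases (show -1 ≤ mink (P.e i) (P.e j) by linarith).lt_or_eq with h1 | h1
  · exact Or.inl (hE.mink_eq_zero_of_neg_one_lt hra hi'.1 hj'.1 hij h1)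
  · exact Or.inr h1.symm

/-- Opposite walls at an ideal vertex have opposite normals modulo the vertex. -/
theorem mink_opposite (hv : ‖v‖ = 1) {i j : Fin P.m} (hi : i ∈ P.active E v)
    (hj : j ∈ P.active E v) (hij : mink (P.e i) (P.e j) = -1) {z : Fin (n + 1) → ℝ}
    (hz : mink (homog v) z = 0) : mink (P.e j) z = -mink (P.e i) z := by
  have h := eq_smul_of_orthogonal_ideal hv (y := P.e i + P.e j)
    (by rw [mink_comm, mink_add_left, (mem_active.1 hi).2, (mem_active.1 hj).2, add_zero])
    (by simp only [mink_add_left, mink_add_right, P.unit, mink_comm (P.e j) (P.e i), hij]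
        norm_num)
  have h2 := congrArg (fun u => mink u z) h
  simp only [mink_add_left, mink_smul_left, hz, mul_zero] at h2
  linarith

/-- Every wall through an ideal vertex has a unique opposite wall. -/
theorem exists_opposite (hE : P.IsIrredundant E) (hra : P.IsRightAngled) (hfv : P.FiniteVolume)
    (hv : v ∈ P.idealVerts) :
    ∃ σ : Fin P.m → Fin P.m, (∀ i ∈ P.active E v, σ i ∈ P.active E v ∧ σ i ≠ i ∧ σ (σ i) = i) ∧
      ∀ i ∈ P.active E v, ∀ j ∈ P.active E v, i ≠ j →
        (mink (P.e i) (P.e j) = 0 ↔ j ≠ σ i) := by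
  have hv1 : ‖v‖ = 1 := hv.2
  have hperp : ∀ i ∈ P.active E v, mink (homog v) (P.e i) = 0 := fun i hi => by
    rw [mink_comm, (mem_active.1 hi).2]
  have hex : ∀ i, ∃ j, i ∈ P.active E v →
      j ∈ P.active E v ∧ j ≠ i ∧ mink (P.e i) (P.e j) = -1 := by
    intro i
    by_cases hi : i ∈ P.active E v
    · by_contra! h
      have := hE.mink_self_nonpos_of_recession hfv hv (y := -P.e i)
        (by rw [mink_neg_right, hperp i hi, neg_zero]) fun l hl => by
          rw [mink_neg_right, neg_nonpos]
          by_cases hli : l = i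
          · rw [hli, P.unit]; norm_num
          · rw [mink_comm]
            exact ((hE.mink_eq_zero_or_of_active_ideal hra hv1 hi hl (Ne.symm hli)).resolve_right
              ((h l).2 hl hli)).ge
      rw [mink_neg_left, mink_neg_right, P.unit] at this
      norm_num at this
    · exact ⟨i, fun h => absurd h hi⟩
  choose σ hσ using hex
  have huniq : ∀ i ∈ P.active E v, ∀ j ∈ P.active E v, i ≠ j →
      mink (P.e i) (P.e j) = -1 → j = σ i := by
    intro i hi j hj hij hm
    obtain ⟨h1, h2, h3⟩ := hσ i hi
    by_contra hne
    have h4 := mink_opposite hv1 hi h1 h3 (hperp j hj)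
    rw [hm, mink_comm] at h4
    have := hE.mink_nonpos hra (mem_active.1 hj).1 (mem_active.1 h1).1 hne
    linarith
  refine ⟨σ, fun i hi => ?_, fun i hi j hj hij => ⟨?_, fun h => ?_⟩⟩
  · obtain ⟨h1, h2, h3⟩ := hσ i hi
    exact ⟨h1, h2, (huniq _ h1 i hi h2 (by rw [mink_comm, h3])).symm⟩
  · rintro h rfl
    rw [(hσ i hi).2.2] at h
    norm_num at h
  · exact (hE.mink_eq_zero_or_of_active_ideal hra hv1 hi hj hij).resolve_right
      fun h' => h (huniq i hi j hj hij h')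

/-- A transversal of the pairs of opposite walls at an ideal vertex has `n - 1` elements. -/
theorem card_transversal (hE : P.IsIrredundant E) (hra : P.IsRightAngled)
    (hfv : P.FiniteVolume) (hv : v ∈ P.idealVerts) {R : Finset (Fin P.m)}
    (hR : R ⊆ P.active E v)
    (hRo : ∀ i ∈ R, ∀ j ∈ R, i ≠ j → mink (P.e i) (P.e j) = 0)
    (hRt : ∀ j ∈ P.active E v, j ∈ R ∨ ∃ i ∈ R, mink (P.e i) (P.e j) = -1) :
    R.card + 1 = n := by
  have hv1 : ‖v‖ = 1 := hv.2
  have hRE : R ⊆ E := hR.trans (Finset.filter_subset _ _)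
  have hdim := hE.sdim_faceOf hra hRE hRo
  obtain ⟨f, hf, hfR, hfl⟩ := hE.exists_relint_point hra hRE hRo
  have hle : ∀ l, mink (P.e l) f ≤ 0 := hE.le_zero f hf fun l hl => by
    by_cases h : l ∈ R
    · exact (hfR l h).le
    · exact (hfl l hl h).le
  have hqF := kleinMap_mem_faceOf hf hle hfR
  have hq : Timelike (homog (kleinMap f)) := by
    rw [hf.homog_kleinMap]; exact hf.smul (inv_pos.2 hf.pos)
  set q := kleinMap f
  have hqv : q ≠ v := fun h => by
    have := timelike_homog.1 hq
    rw [h, hv1] at this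
    exact lt_irrefl _ this
  have hvF : v ∈ P.faceOf R :=
    ⟨mem_cl_of_mem_verts hv.1, fun i hi => (mem_active.1 (hR hi)).2⟩
  have hqneg := hq.mink_ideal_neg hv1
  have hle1 : sdim (P.faceOf R) ≤ 1 := by
    refine collinear_iff_finrank_le_one.1
      ((collinear_iff_of_mem hvF).2 ⟨q - v, fun p hp => ?_⟩)
    set z := mink (homog v) (homog q) • homog p - mink (homog v) (homog p) • homog q with hz
    have hzv : mink (homog v) z = 0 := by
      rw [hz, mink_sub_right, mink_smul_right, mink_smul_right]; ring
    have hzR : ∀ i ∈ R, mink (P.e i) z = 0 := fun i hi => by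
      rw [hz, mink_sub_right, mink_smul_right, mink_smul_right, hp.2 i hi, hqF.2 i hi]; ring
    have hzz := hE.mink_self_nonpos_of_recession hfv hv hzv fun l hl => by
      rcases hRt l hl with h | ⟨i, hi, hil⟩
      · exact (hzR l h).le
      · rw [mink_opposite hv1 (hR hi) hl hil hzv, hzR i hi, neg_zero]
    have hzeq := congrArg spatial (eq_smul_of_orthogonal_ideal hv1 hzv hzz)
    have hz0 : z 0 = mink (homog v) (homog q) - mink (homog v) (homog p) := by
      simp [hz]
    have hzs : spatial z = mink (homog v) (homog q) • p - mink (homog v) (homog p) • q := by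
      rw [hz, sub_eq_add_neg, ← neg_smul, spatial_add, spatial_smul, spatial_smul, spatial_homog,
        spatial_homog, neg_smul, sub_eq_add_neg]
    rw [hzs, hz0, spatial_smul, spatial_homog] at hzeq
    refine ⟨mink (homog v) (homog p) / mink (homog v) (homog q), ?_⟩
    rw [vadd_eq_add, ← sub_eq_iff_eq_add]
    refine smul_right_injective _ hqneg.ne ?_
    simp only [smul_smul, mul_div_cancel₀ _ hqneg.ne]
    rw [sub_smul, sub_eq_sub_iff_add_eq_add] at hzeq
    rw [smul_sub, smul_sub, sub_eq_sub_iff_add_eq_add]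
    rw [show mink (homog v) (homog p) • q = mink (homog v) (homog q) • p +
      mink (homog v) (homog p) • v - mink (homog v) (homog q) • v by
        rw [hzeq]; abel]
    abel
  have hge1 : sdim (P.faceOf R) ≠ 0 := by
    intro h
    have hbot : vectorSpan ℝ (P.faceOf R) = ⊥ := Submodule.finrank_eq_zero.1 h
    have hm := vsub_mem_vectorSpan ℝ hqF hvF
    rw [hbot, Submodule.mem_bot, vsub_eq_sub, sub_eq_zero] at hm
    exact hqv hm
  omega

end IsIrredundant

end HypPolyhedron

/-- If `σ` is a fixed-point-free involution of a finite set `A`, the number of `r`-element subsets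
of `A` that contain no pair `{i, σ i}` is `C(c, r) * 2 ^ r`, where `c` is the number of pairs. -/
theorem Finset.card_powersetCard_involution_free {α : Type*} [LinearOrder α] {A : Finset α}
    {σ : α → α} (hσ : ∀ i ∈ A, σ i ∈ A ∧ σ i ≠ i ∧ σ (σ i) = i) (r : ℕ) :
    {S ∈ A.powersetCard r | ∀ i ∈ S, σ i ∉ S}.card = {i ∈ A | i < σ i}.card.choose r * 2 ^ r := by
  set R := {i ∈ A | i < σ i} with hR
  have hRA : ∀ {i}, i ∈ R → i ∈ A ∧ i < σ i := fun h => Finset.mem_filter.1 h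
  have hinj : Set.InjOn σ A := fun i hi j hj h => by
    rw [← (hσ i hi).2.2, ← (hσ j hj).2.2, h]
  have hσR : ∀ {i}, i ∈ R → σ i ∉ R := fun {i} hi h => by
    have := (hRA h).2
    rw [(hσ i (hRA hi).1).2.2] at this
    exact lt_asymm this (hRA hi).2
  have hcard : ((R.powersetCard r).sigma fun T => T.powerset).card = R.card.choose r * 2 ^ r := by
    rw [Finset.card_sigma, Finset.sum_congr rfl fun T hT => by
      rw [Finset.card_powerset, (Finset.mem_powersetCard.1 hT).2], Finset.sum_const,
      Finset.card_powersetCard, smul_eq_mul]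
  rw [← hcard]
  symm
  refine Finset.card_bij (fun x _ => x.2 ∪ (x.1 \ x.2).image σ) ?_ ?_ ?_
  · rintro ⟨T, U⟩ hTU
    simp only [Finset.mem_sigma, Finset.mem_powersetCard, Finset.mem_powerset] at hTU
    obtain ⟨⟨hTR, hTr⟩, hUT⟩ := hTU
    rw [Finset.mem_filter, Finset.mem_powersetCard]
    refine ⟨⟨?_, ?_⟩, ?_⟩
    · intro i hi
      rcases Finset.mem_union.1 hi with h | h
      · exact (hRA (hTR (hUT h))).1
      · obtain ⟨j, hj, rfl⟩ := Finset.mem_image.1 h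
        exact (hσ j (hRA (hTR (Finset.mem_sdiff.1 hj).1)).1).1
    · rw [Finset.card_union_of_disjoint, Finset.card_image_of_injOn, add_comm,
        Finset.card_sdiff_add_card_eq_card hUT, hTr]
      · exact hinj.mono fun j hj => (hRA (hTR (Finset.mem_sdiff.1 hj).1)).1
      · refine Finset.disjoint_left.2 fun i hi h => ?_
        obtain ⟨j, hj, rfl⟩ := Finset.mem_image.1 h
        exact hσR (hTR (Finset.mem_sdiff.1 hj).1) (hTR (hUT hi))
    · intro i hi hi'
      rcases Finset.mem_union.1 hi with h | h
      · rcases Finset.mem_union.1 hi' with h' | h'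
        · exact hσR (hTR (hUT h)) (hTR (hUT h'))
        · obtain ⟨j, hj, hji⟩ := Finset.mem_image.1 h'
          rw [Finset.mem_sdiff] at hj
          exact hj.2 (hinj (hRA (hTR hj.1)).1 (hRA (hTR (hUT h))).1 hji ▸ h)
      · obtain ⟨j, hj, rfl⟩ := Finset.mem_image.1 h
        rw [Finset.mem_sdiff] at hj
        have hjR := hTR hj.1
        rw [(hσ j (hRA hjR).1).2.2] at hi'
        rcases Finset.mem_union.1 hi' with h' | h'
        · exact hj.2 h'
        · obtain ⟨l, hl, rfl⟩ := Finset.mem_image.1 h'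
          exact hσR (hTR (Finset.mem_sdiff.1 hl).1) hjR
  · have key : ∀ {T U : Finset α}, T ⊆ R → U ⊆ T → ∀ i ∈ R,
        (i ∈ U ↔ i ∈ U ∪ (T \ U).image σ) ∧
        (i ∈ T ↔ i ∈ U ∪ (T \ U).image σ ∨ σ i ∈ U ∪ (T \ U).image σ) := by
      intro T U hT hU i hi
      have h1 : i ∉ (T \ U).image σ := fun h => by
        obtain ⟨l, hl, rfl⟩ := Finset.mem_image.1 h
        exact hσR (hT (Finset.mem_sdiff.1 hl).1) hi
      have h2 : σ i ∉ U := fun h => hσR hi (hT (hU h))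
      have h3 : σ i ∈ (T \ U).image σ ↔ i ∈ T \ U := by
        refine ⟨fun h => ?_, Finset.mem_image_of_mem σ⟩
        obtain ⟨l, hl, hli⟩ := Finset.mem_image.1 h
        exact hinj (hRA (hT (Finset.mem_sdiff.1 hl).1)).1 (hRA hi).1 hli ▸ hl
      have h4 : i ∈ U → i ∈ T := fun h => hU h
      simp only [Finset.mem_union, h1, h2, h3, Finset.mem_sdiff]
      tauto
    rintro ⟨T, U⟩ hTU ⟨T', U'⟩ hTU' h
    simp only [Finset.mem_sigma, Finset.mem_powersetCard, Finset.mem_powerset] at hTU hTU' h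
    have hT : T = T' := by
      ext i
      by_cases hi : i ∈ R
      · rw [(key hTU.1.1 hTU.2 i hi).2, (key hTU'.1.1 hTU'.2 i hi).2, h]
      · exact iff_of_false (fun h => hi (hTU.1.1 h)) fun h => hi (hTU'.1.1 h)
    have hU : U = U' := by
      ext i
      by_cases hi : i ∈ R
      · rw [(key hTU.1.1 hTU.2 i hi).1, (key hTU'.1.1 hTU'.2 i hi).1, h]
      · exact iff_of_false (fun h => hi (hTU.1.1 (hTU.2 h))) fun h => hi (hTU'.1.1 (hTU'.2 h))
    rw [hT, hU]
  · intro S hS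
    rw [Finset.mem_filter, Finset.mem_powersetCard] at hS
    obtain ⟨⟨hSA, hSr⟩, hSσ⟩ := hS
    have hS2 : ∀ {i}, i ∈ A → i ∉ R → σ i ∈ R := fun {i} hi h => by
      refine Finset.mem_filter.2 ⟨(hσ i hi).1, ?_⟩
      rw [(hσ i hi).2.2]
      refine lt_of_le_of_ne (not_lt.1 fun h' => h (Finset.mem_filter.2 ⟨hi, h'⟩)) (hσ i hi).2.1
    have hU : {i ∈ R | i ∈ S ∨ σ i ∈ S} \ {i ∈ R | i ∈ S} = {i ∈ R | σ i ∈ S} := by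
      ext i
      have := hSσ i
      simp only [Finset.mem_sdiff, Finset.mem_filter]
      tauto
    have hunion : {i ∈ R | i ∈ S} ∪ {i ∈ R | σ i ∈ S}.image σ = S := by
      ext i
      simp only [Finset.mem_union, Finset.mem_image, Finset.mem_filter]
      constructor
      · rintro (h | ⟨j, hj, rfl⟩)
        exacts [h.2, hj.2]
      · intro hi
        by_cases h : i ∈ R
        · exact Or.inl ⟨h, hi⟩
        · have := (hσ i (hSA hi)).2.2
          exact Or.inr ⟨σ i, ⟨hS2 (hSA hi) h, this.symm ▸ hi⟩, this⟩
    have hTcard : {i ∈ R | i ∈ S ∨ σ i ∈ S}.card = r := by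
      rw [← hSr, ← Finset.card_sdiff_add_card_eq_card (s := {i ∈ R | i ∈ S})
        (Finset.monotone_filter_right R fun i _ h => Or.inl h), hU, ← Finset.card_image_of_injOn
        (s := {i ∈ R | σ i ∈ S}) (hinj.mono fun i hi => (hRA (Finset.mem_filter.1 hi).1).1),
        add_comm, ← Finset.card_union_of_disjoint, hunion]
      refine Finset.disjoint_left.2 fun i hi h => ?_
      obtain ⟨j, hj, rfl⟩ := Finset.mem_image.1 h
      exact hσR (Finset.mem_filter.1 hj).1 (Finset.mem_filter.1 hi).1
    refine ⟨⟨{i ∈ R | i ∈ S ∨ σ i ∈ S}, {i ∈ R | i ∈ S}⟩, ?_, ?_⟩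
    · simp only [Finset.mem_sigma, Finset.mem_powersetCard, Finset.mem_powerset]
      exact ⟨⟨Finset.filter_subset _ _, hTcard⟩,
        Finset.monotone_filter_right R fun i _ h => Or.inl h⟩
    · dsimp only
      rw [hU, hunion]

namespace HypPolyhedron

variable {n : ℕ} {P : HypPolyhedron n} {v : EuclideanSpace ℝ (Fin n)} {k : ℕ}

theorem ncard_faces_through_finite (hra : P.IsRightAngled) (hk : 1 ≤ k) (hkn : k ≤ n)
    (hv : v ∈ P.finiteVerts) : {F ∈ P.faces k | v ∈ F}.ncard = n.choose k := by
  obtain ⟨E, hE⟩ := P.exists_isIrredundant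
  rw [hE.ncard_faces_through hra hk hkn (mem_cl_of_mem_verts hv.1), Finset.filter_true_of_mem,
    Finset.card_powersetCard, hE.card_active_finite hra hv, Nat.choose_symm hkn]
  intro S hS i hi j hj hij
  have hSA := (Finset.mem_powersetCard.1 hS).1
  exact hE.mink_eq_zero_of_active_finite hra hv.2 (hSA hi) (hSA hj) hij

theorem ncard_faces_through_ideal (hra : P.IsRightAngled) (hfv : P.FiniteVolume) (hk : 1 ≤ k)
    (hkn : k ≤ n) (hv : v ∈ P.idealVerts) :
    {F ∈ P.faces k | v ∈ F}.ncard = (n - 1).choose (k - 1) * 2 ^ (n - k) := by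
  obtain ⟨E, hE⟩ := P.exists_isIrredundant
  obtain ⟨σ, hσ, hσo⟩ := hE.exists_opposite hra hfv hv
  have hRcard : {i ∈ P.active E v | i < σ i}.card + 1 = n := by
    refine hE.card_transversal hra hfv hv (Finset.filter_subset _ _) ?_ ?_
    · intro i hi j hj hij
      rw [Finset.mem_filter] at hi hj
      refine (hσo i hi.1 j hj.1 hij).2 ?_
      rintro rfl
      have := hj.2
      rw [(hσ i hi.1).2.2] at this
      exact lt_asymm hi.2 this
    · intro j hj
      obtain ⟨hσj, hne, hσσ⟩ := hσ j hj
      rcases lt_or_gt_of_ne hne with h | h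
      · refine Or.inr ⟨σ j, Finset.mem_filter.2 ⟨hσj, hσσ.symm ▸ h⟩, ?_⟩
        refine (hE.mink_eq_zero_or_of_active_ideal hra hv.2 hσj hj hne).resolve_left fun h0 => ?_
        exact (hσo (σ j) hσj j hj hne).1 h0 hσσ.symm
      · exact Or.inl (Finset.mem_filter.2 ⟨hj, h⟩)
  rw [hE.ncard_faces_through hra hk hkn (mem_cl_of_mem_verts hv.1),
    ← Nat.choose_symm (by omega : k - 1 ≤ n - 1), show n - 1 - (k - 1) = n - k by omega,
    show n - 1 = {i ∈ P.active E v | i < σ i}.card by omega]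
  refine Eq.trans (congrArg Finset.card ?_) (Finset.card_powersetCard_involution_free hσ (n - k))
  ext S
  simp only [Finset.mem_filter]
  refine and_congr_right fun hS => ?_
  have hSA := (Finset.mem_powersetCard.1 hS).1
  constructor
  · intro h i hi hσi
    have hne := (hσ i (hSA hi)).2.1
    exact (hσo i (hSA hi) _ (hSA hσi) hne.symm).1 (h i hi _ hσi hne.symm) rfl
  · intro h i hi j hj hij
    exact (hσo i (hSA hi) j (hSA hj) hij).2 fun hji => h i hi (hji ▸ hj)

end HypPolyhedron

/-- In a finite-volume right-angled convex hyperbolic `n`-polyhedron, for `1 ≤ k ≤ n - 1`,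
every finite vertex is contained in exactly `C(n, k)` `k`-faces and every ideal vertex is
contained in exactly `C(n-1, k-1) ⬝ 2^{n-k}` `k`-faces; in particular every ideal vertex is
contained in exactly `2(n-1)` facets. -/
theorem faces_through_vertices (n k : ℕ) (hn : 2 ≤ n) (hk : 1 ≤ k) (hk' : k ≤ n - 1)
    (P : HypPolyhedron n) (hfv : P.FiniteVolume) (hra : P.IsRightAngled) :
    (∀ v ∈ P.finiteVerts, {F ∈ P.faces k | v ∈ F}.ncard = Nat.choose n k) ∧
      (∀ v ∈ P.idealVerts,
        {F ∈ P.faces k | v ∈ F}.ncard = Nat.choose (n - 1) (k - 1) * 2 ^ (n - k)) ∧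
      (∀ v ∈ P.idealVerts, {F ∈ P.faces (n - 1) | v ∈ F}.ncard = 2 * (n - 1)) := by
  refine ⟨fun v hv => HypPolyhedron.ncard_faces_through_finite hra hk (by omega) hv,
    fun v hv => HypPolyhedron.ncard_faces_through_ideal hra hfv hk (by omega) hv, fun v hv => ?_⟩
  rw [HypPolyhedron.ncard_faces_through_ideal hra hfv (by omega) (by omega) hv]
  obtain ⟨m, rfl⟩ := Nat.exists_eq_add_of_le' hn
  simp [Nat.choose_succ_self_right, mul_comm]
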